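/- Let u₁, u₂ solve ∂_t v = ν ∂²_x v − l(t,x) v on the strip [0, x₀] × ℝ with boundary conditions v(t,0) = v(t,x₀) = 0, where ‖l(t,·)‖_{C[0,x₀]} ≤ L for all t and ν(π/x₀)² > L. If the difference v = u₁ − u₂ is bounded in L²(0,x₀) as t → −∞, then v ≡ 0 on [0,x₀] × ℝ. -/

import Mathlib

open Real intervalIntegral

open Set Filter Topology MeasureTheory

theorem HasDerivAt.nonneg_of_forall_le_of_left {f : ℝ → ℝ} {f' a b : ℝ} (hab : a < b)
    (hf : HasDerivAt f f' b) (hmax : ∀ t ∈ Icc a b, f t ≤ f b) : 0 ≤ f' := by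
  have h := hf.tendsto_slope.mono_left 
    (nhdsWithin_mono b (show Iio b ⊆ {b}ᶜ from fun t ht => ne_of_lt ht))
  refine ge_of_tendsto h ?_
  filter_upwards [Ioo_mem_nhdsLT hab] with t ht
  rw [slope_def_field]
  exact div_nonneg_of_nonpos (sub_nonpos.2 (hmax t ⟨ht.1.le, ht.2.le⟩)) (sub_nonpos.2 ht.2.le)

theorem IsLocalMax.nonpos_of_hasDerivAt_hasDerivAt {f f' : ℝ → ℝ} {f'' x : ℝ}
    (hmax : IsLocalMax f x) (hf : ∀ᶠ y in 𝓝 x, HasDerivAt f (f' y) y)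
    (hf' : HasDerivAt f' f'' x) : f'' ≤ 0 := by
  by_contra! hpos
  have hd : deriv f =ᶠ[𝓝 x] f' := hf.mono fun y hy => hy.deriv
  have hdd : deriv (deriv f) x = f'' := hd.deriv_eq.trans hf'.deriv
  have hmin : IsLocalMin f x :=
    isLocalMin_of_deriv_deriv_pos (by rwa [hdd]) hmax.deriv_eq_zero
      hf.self_of_nhds.continuousAt
  have hconst : f =ᶠ[𝓝 x] fun _ => f x := by
    filter_upwards [hmax, hmin] with y h₁ h₂ using le_antisymm h₁ h₂
  have h0 : deriv (deriv f) x = 0 := by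
    rw [hconst.deriv.deriv_eq]
    simp
  linarith

/-- Weak maximum principle for subsolutions of `∂ₜ w = ν ∂ₓ² w - l w` on a strip. -/
theorem parabolic_maximum_principle {ν x₀ L s : ℝ} (hν : 0 < ν)
    {l w wt wx wxx : ℝ → ℝ → ℝ} (hl : ∀ t, ∀ x ∈ Icc 0 x₀, |l t x| ≤ L)
    (hc : Continuous fun p : ℝ × ℝ => w p.1 p.2)
    (hleft : ∀ t, s ≤ t → w t 0 ≤ 0) (hright : ∀ t, s ≤ t → w t x₀ ≤ 0)
    (hinit : ∀ x ∈ Icc 0 x₀, w s x ≤ 0)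
    (ht : ∀ t, s < t → ∀ x ∈ Ioo 0 x₀, HasDerivAt (fun r => w r x) (wt t x) t)
    (hx : ∀ t, s < t → ∀ x ∈ Ioo 0 x₀, HasDerivAt (w t) (wx t x) x)
    (hxx : ∀ t, s < t → ∀ x ∈ Ioo 0 x₀, HasDerivAt (wx t) (wxx t x) x)
    (hsub : ∀ t, s < t → ∀ x ∈ Ioo 0 x₀, wt t x ≤ ν * wxx t x - l t x * w t x)
    {T x : ℝ} (hT : s ≤ T) (hxI : x ∈ Icc 0 x₀) : w T x ≤ 0 := by
  by_contra! hpos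
  set K := L + 1 with hK
  obtain ⟨⟨t', x'⟩, ⟨ht', hx'⟩, hmax⟩ :=
    (isCompact_Icc.prod isCompact_Icc : IsCompact (Icc s T ×ˢ Icc 0 x₀)).exists_isMaxOn
      ⟨(T, x), ⟨hT, le_rfl⟩, hxI⟩
      (f := fun p : ℝ × ℝ => exp (-K * p.1) * w p.1 p.2) (by fun_prop)
  have hmax' : ∀ r ∈ Icc s T, ∀ y ∈ Icc 0 x₀,
      exp (-K * r) * w r y ≤ exp (-K * t') * w t' x' := fun r hr y hy =>
    hmax (show (r, y) ∈ Icc s T ×ˢ Icc 0 x₀ from ⟨hr, hy⟩)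
  have hwpos : 0 < w t' x' := by
    have h := hmax' T ⟨hT, le_rfl⟩ x hxI
    have : 0 < exp (-K * T) * w T x := by positivity
    exact pos_of_mul_pos_right (this.trans_le h) (exp_pos _).le
  simp only at ht' hx'
  have hst : s < t' := by
    refine lt_of_le_of_ne ht'.1 fun h => ?_
    have := hinit x' hx'
    rw [h] at this
    linarith
  have hx'' : x' ∈ Ioo 0 x₀ := by
    refine ⟨lt_of_le_of_ne hx'.1 fun h => ?_, lt_of_le_of_ne hx'.2 fun h => ?_⟩
    · have := hleft t' hst.le
      rw [h] at this
      linarith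
    · have := hright t' hst.le
      rw [← h] at this
      linarith
  have hE : HasDerivAt (fun r => exp (-K * r)) (exp (-K * t') * -K) t' := by
    simpa using ((hasDerivAt_id t').const_mul (-K)).exp
  have htime := (hE.mul (ht t' hst x' hx'')).nonneg_of_forall_le_of_left hst
    fun r hr => hmax' r ⟨hr.1, hr.2.trans ht'.2⟩ x' hx'
  have hlocmax : IsLocalMax (w t') x' := by
    filter_upwards [Ioo_mem_nhds hx''.1 hx''.2] with y hy
    exact le_of_mul_le_mul_left (hmax' t' ht' y ⟨hy.1.le, hy.2.le⟩) (exp_pos _)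
  have hspace := hlocmax.nonpos_of_hasDerivAt_hasDerivAt
    (by filter_upwards [Ioo_mem_nhds hx''.1 hx''.2] with y hy using hx t' hst y hy)
    (hxx t' hst x' hx'')
  have htime' : 0 ≤ wt t' x' - K * w t' x' := by
    refine nonneg_of_mul_nonneg_right (a := exp (-K * t')) ?_ (exp_pos _)
    linarith
  have h₁ := hsub t' hst x' hx''
  have h₂ := (abs_le.1 (hl t' x' hx')).1
  nlinarith [mul_nonneg_of_nonpos_of_nonpos hspace (neg_nonpos.2 hν.le)]

/-- A solution of `∂ₜ v = ν ∂ₓ² v - l v` with Dirichlet boundary conditions is dominated in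
absolute value by any supersolution that dominates it initially. -/
theorem abs_le_of_parabolic_supersolution {ν x₀ L s : ℝ} (hν : 0 < ν)
    {l v vx vxx ψ ψt ψx ψxx : ℝ → ℝ → ℝ} (hl : ∀ t, ∀ x ∈ Icc 0 x₀, |l t x| ≤ L)
    (hvc : Continuous fun p : ℝ × ℝ => v p.1 p.2)
    (hv₀ : ∀ t, v t 0 = 0) (hv₁ : ∀ t, v t x₀ = 0)
    (hvt : ∀ t, ∀ x ∈ Icc 0 x₀,
      HasDerivAt (fun r => v r x) (ν * vxx t x - l t x * v t x) t)
    (hvx : ∀ t x, HasDerivAt (v t) (vx t x) x)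
    (hvxx : ∀ t x, HasDerivAt (vx t) (vxx t x) x)
    (hψc : Continuous fun p : ℝ × ℝ => ψ p.1 p.2)
    (hψ₀ : ∀ t, s ≤ t → 0 ≤ ψ t 0) (hψ₁ : ∀ t, s ≤ t → 0 ≤ ψ t x₀)
    (hψt : ∀ t, s < t → ∀ x ∈ Ioo 0 x₀, HasDerivAt (fun r => ψ r x) (ψt t x) t)
    (hψx : ∀ t, s < t → ∀ x ∈ Ioo 0 x₀, HasDerivAt (ψ t) (ψx t x) x)
    (hψxx : ∀ t, s < t → ∀ x ∈ Ioo 0 x₀, HasDerivAt (ψx t) (ψxx t x) x)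
    (hsup : ∀ t, s < t → ∀ x ∈ Ioo 0 x₀, ν * ψxx t x - l t x * ψ t x ≤ ψt t x)
    (hinit : ∀ x ∈ Icc 0 x₀, |v s x| ≤ ψ s x)
    {t x : ℝ} (ht : s ≤ t) (hx : x ∈ Icc 0 x₀) : |v t x| ≤ ψ t x := by
  rw [abs_le']
  constructor
  · refine sub_nonpos.1 (parabolic_maximum_principle hν hl
      (w := fun t x => v t x - ψ t x) (wx := fun t x => vx t x - ψx t x)
      (hvc.sub hψc) (fun t h => ?_) (fun t h => ?_)
      (fun x h => sub_nonpos.2 ((abs_le'.1 (hinit x h)).1))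
      (fun t h x hx => (hvt t x (Ioo_subset_Icc_self hx)).sub (hψt t h x hx))
      (fun t h x hx => (hvx t x).sub (hψx t h x hx))
      (fun t h x hx => (hvxx t x).sub (hψxx t h x hx))
      (fun t h x hx => ?_) ht hx)
    · simpa [hv₀] using hψ₀ t h
    · simpa [hv₁] using hψ₁ t h
    · linarith [hsup t h x hx]
  · refine sub_nonpos.1 (parabolic_maximum_principle hν hl
      (w := fun t x => -v t x - ψ t x) (wx := fun t x => -vx t x - ψx t x)
      (hvc.neg.sub hψc) (fun t h => ?_) (fun t h => ?_)
      (fun x h => sub_nonpos.2 ((abs_le'.1 (hinit x h)).2))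
      (fun t h x hx => (hvt t x (Ioo_subset_Icc_self hx)).neg.sub (hψt t h x hx))
      (fun t h x hx => (hvx t x).neg.sub (hψx t h x hx))
      (fun t h x hx => (hvxx t x).neg.sub (hψxx t h x hx))
      (fun t h x hx => ?_) ht hx)
    · simpa [hv₀] using hψ₀ t h
    · simpa [hv₁] using hψ₁ t h
    · linarith [hsup t h x hx]

theorem hasDerivAt_integral_mul_of_continuousOn {k k' : ℝ → ℝ → ℝ} {f : ℝ → ℝ} {U : Set ℝ}
    {a b p : ℝ} (hU : IsOpen U) (hp : p ∈ U) (hf : Continuous f)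
    (hk : ∀ q ∈ U, Continuous (k q))
    (hk' : ContinuousOn (fun z : ℝ × ℝ => k' z.1 z.2) (U ×ˢ univ))
    (hderiv : ∀ q ∈ U, ∀ y, HasDerivAt (fun r => k r y) (k' q y) q) :
    HasDerivAt (fun q => ∫ y in a..b, k q y * f y) (∫ y in a..b, k' p y * f y) p := by
  obtain ⟨ε, hε, hball⟩ := Metric.nhds_basis_closedBall.mem_iff.1 (hU.mem_nhds hp)
  have hk'f : ContinuousOn (fun z : ℝ × ℝ => k' z.1 z.2 * f z.2) (U ×ˢ univ) :=
    hk'.mul (by fun_prop)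
  obtain ⟨C, hC⟩ := ((isCompact_closedBall p ε).prod
    (isCompact_uIcc : IsCompact (uIcc a b))).exists_bound_of_continuousOn
    (hk'f.mono (prod_mono hball (subset_univ _)))
  have hk'p : Continuous fun y => k' p y * f y := by
    rw [← continuousOn_univ]
    exact hk'f.comp (f := fun y => (p, y)) (by fun_prop) fun y _ => ⟨hp, mem_univ y⟩
  refine (intervalIntegral.hasDerivAt_integral_of_dominated_loc_of_deriv_le
    (F := fun q y => k q y * f y) (F' := fun q y => k' q y * f y) (bound := fun _ => C)
    (Metric.closedBall_mem_nhds p hε) ?_ ?_ ?_ ?_ ?_ ?_).2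
  · filter_upwards [hU.mem_nhds hp] with q hq
    exact ((hk q hq).mul hf).aestronglyMeasurable
  · exact ((hk p hp).mul hf).intervalIntegrable _ _
  · exact hk'p.aestronglyMeasurable
  · exact ae_of_all _ fun y hy q hq => hC (q, y) ⟨hq, uIoc_subset_uIcc hy⟩
  · exact intervalIntegrable_const
  · exact ae_of_all _ fun y _ q hq => (hderiv q (hball hq) y).mul_const _

/-- The one-dimensional heat kernel with diffusivity `ν`, up to the constant `2 * √(π * ν)`. -/
noncomputable def heatKernel (ν τ z : ℝ) : ℝ := (√τ)⁻¹ * exp (-z ^ 2 / (4 * ν * τ))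

theorem heatKernel_one_le_one {ν : ℝ} (hν : 0 < ν) (z : ℝ) : heatKernel ν 1 z ≤ 1 := by
  have : -z ^ 2 / (4 * ν * 1) ≤ 0 := div_nonpos_of_nonpos_of_nonneg (by nlinarith) (by positivity)
  simpa [heatKernel] using this

theorem continuousOn_heatKernel {ν : ℝ} (hν : 0 < ν) :
    ContinuousOn (fun p : ℝ × ℝ => heatKernel ν p.1 p.2) (Ioi 0 ×ˢ univ) := by
  unfold heatKernel
  refine ContinuousOn.mul (ContinuousOn.inv₀ (by fun_prop) ?_)
    (ContinuousOn.rexp (ContinuousOn.div (by fun_prop) (by fun_prop) ?_))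
  · rintro ⟨τ, z⟩ ⟨hτ, -⟩
    exact (sqrt_pos.2 hτ).ne'
  · rintro ⟨τ, z⟩ ⟨hτ, -⟩
    have : 0 < τ := hτ
    positivity

theorem continuous_heatKernel (ν τ : ℝ) : Continuous (heatKernel ν τ) := by
  unfold heatKernel
  fun_prop

theorem hasDerivAt_heatKernel {ν τ : ℝ} (hν : 0 < ν) (hτ : 0 < τ) (z : ℝ) :
    HasDerivAt (heatKernel ν τ) (-z / (2 * ν * τ) * heatKernel ν τ z) z := by
  have h := ((((hasDerivAt_id z).pow 2).neg.div_const (4 * ν * τ)).exp).const_mul (√τ)⁻¹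
  refine h.congr_deriv ?_
  simp only [heatKernel, id, Pi.neg_apply, Pi.pow_apply]
  field_simp
  ring

theorem hasDerivAt_deriv_heatKernel {ν τ : ℝ} (hν : 0 < ν) (hτ : 0 < τ) (z : ℝ) :
    HasDerivAt (fun z => -z / (2 * ν * τ) * heatKernel ν τ z)
      ((z ^ 2 / (4 * ν ^ 2 * τ ^ 2) - 1 / (2 * ν * τ)) * heatKernel ν τ z) z := by
  have h := ((hasDerivAt_id z).neg.div_const (2 * ν * τ)).mul (hasDerivAt_heatKernel hν hτ z)
  refine h.congr_deriv ?_
  simp only [id, Pi.neg_apply]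
  field_simp
  ring

theorem hasDerivAt_heatKernel_time {ν τ : ℝ} (hν : 0 < ν) (hτ : 0 < τ) (z : ℝ) :
    HasDerivAt (fun τ => heatKernel ν τ z)
      (ν * ((z ^ 2 / (4 * ν ^ 2 * τ ^ 2) - 1 / (2 * ν * τ)) * heatKernel ν τ z)) τ := by
  have hs : 0 < √τ := sqrt_pos.2 hτ
  have h₁ := (hasDerivAt_sqrt hτ.ne').inv hs.ne'
  have h₂ := (((hasDerivAt_id τ).const_mul (4 * ν)).fun_inv
    (by simp only [id]; positivity)).const_mul (-z ^ 2)
  have h := h₁.mul h₂.exp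
  refine (h.congr_deriv ?_).congr_of_eventuallyEq (Eventually.of_forall fun r => ?_)
  · simp only [heatKernel, id, Pi.inv_apply, Real.sq_sqrt hτ.le, ← div_eq_mul_inv]
    field_simp
    ring
  · simp [heatKernel, div_eq_mul_inv]

/-- The heat evolution of `f`, written as a Gaussian average of translates of `f`; this form is
also meaningful at time `0`. -/
noncomputable def heatEvolution (ν : ℝ) (f : ℝ → ℝ) (τ x : ℝ) : ℝ :=
  (√π)⁻¹ * ∫ z : ℝ, exp (-z ^ 2) * f (x + 2 * (√ν * √τ) * z)

theorem integral_exp_neg_sq : ∫ z : ℝ, exp (-z ^ 2) = √π := by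
  simpa using integral_gaussian 1

theorem integrable_exp_neg_sq : Integrable fun z : ℝ => exp (-z ^ 2) := by
  simpa using integrable_exp_neg_mul_sq (b := 1) one_pos

theorem heatEvolution_zero (ν : ℝ) (f : ℝ → ℝ) (x : ℝ) : heatEvolution ν f 0 x = f x := by
  have : 0 < √π := sqrt_pos.2 pi_pos
  simp only [heatEvolution, sqrt_zero, mul_zero, zero_mul, add_zero,
    MeasureTheory.integral_mul_const, integral_exp_neg_sq]
  field_simp

theorem heatEvolution_nonneg {ν : ℝ} {f : ℝ → ℝ} (hf : ∀ x, 0 ≤ f x) (τ x : ℝ) :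
    0 ≤ heatEvolution ν f τ x :=
  mul_nonneg (by positivity)
    (MeasureTheory.integral_nonneg fun _ => mul_nonneg (exp_pos _).le (hf _))

theorem continuous_heatEvolution {ν C : ℝ} {f : ℝ → ℝ} (hf : Continuous f)
    (hC : ∀ x, |f x| ≤ C) :
    Continuous fun p : ℝ × ℝ => heatEvolution ν f p.1 p.2 := by
  refine continuous_const.mul (continuous_of_dominated
    (bound := fun z => exp (-z ^ 2) * C) (fun p => ?_) (fun p => ?_) ?_ ?_)
  · exact Continuous.aestronglyMeasurable (by fun_prop)
  · refine ae_of_all _ fun z => ?_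
    rw [norm_mul, norm_eq_abs, norm_eq_abs, abs_exp]
    gcongr
    exact hC _
  · exact integrable_exp_neg_sq.mul_const C
  · exact ae_of_all _ fun z => by fun_prop

theorem heatEvolution_eq_integral_heatKernel {ν x₀ τ : ℝ} {f : ℝ → ℝ} (hν : 0 < ν)
    (hx₀ : 0 < x₀) (hf : ∀ x ∉ Ioo 0 x₀, f x = 0) (hτ : 0 < τ) (x : ℝ) :
    heatEvolution ν f τ x =
      (√π)⁻¹ * (2 * √ν)⁻¹ * ∫ y in (0 : ℝ)..x₀, heatKernel ν τ (x - y) * f y := by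
  have hsν : 0 < √ν := sqrt_pos.2 hν
  have hsτ : 0 < √τ := sqrt_pos.2 hτ
  set c := 2 * (√ν * √τ) with hc
  have hcpos : 0 < c := by positivity
  have hc2 : c ^ 2 = 4 * ν * τ := by
    rw [hc, mul_pow, mul_pow, sq_sqrt hν.le, sq_sqrt hτ.le]
    ring
  have h₁ : ∫ z : ℝ, exp (-z ^ 2) * f (x + c * z) =
      c⁻¹ * ∫ u : ℝ, exp (-u ^ 2 / (4 * ν * τ)) * f (x + u) := by
    have := Measure.integral_comp_mul_left
      (fun u : ℝ => exp (-u ^ 2 / (4 * ν * τ)) * f (x + u)) c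
    rw [abs_of_pos (inv_pos.2 hcpos), smul_eq_mul] at this
    rw [← this]
    refine integral_congr_ae (ae_of_all _ fun z => ?_)
    simp only [← hc2]
    congr 2
    field_simp
  have h₂ : ∫ u : ℝ, exp (-u ^ 2 / (4 * ν * τ)) * f (x + u) =
      ∫ y : ℝ, exp (-(x - y) ^ 2 / (4 * ν * τ)) * f y := by
    rw [← integral_sub_right_eq_self
      (fun u : ℝ => exp (-u ^ 2 / (4 * ν * τ)) * f (x + u)) x]
    refine integral_congr_ae (ae_of_all _ fun z => ?_)
    simp only [add_sub_cancel]
    rw [sub_sq_comm]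
  have h₃ : ∫ y : ℝ, exp (-(x - y) ^ 2 / (4 * ν * τ)) * f y =
      ∫ y in (0 : ℝ)..x₀, exp (-(x - y) ^ 2 / (4 * ν * τ)) * f y := by
    rw [integral_of_le hx₀.le]
    refine (setIntegral_eq_integral_of_forall_compl_eq_zero fun y hy => ?_).symm
    rw [hf y fun h => hy (Ioo_subset_Ioc_self h), mul_zero]
  have h₄ : ∫ y in (0 : ℝ)..x₀, heatKernel ν τ (x - y) * f y =
      (√τ)⁻¹ * ∫ y in (0 : ℝ)..x₀, exp (-(x - y) ^ 2 / (4 * ν * τ)) * f y := by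
    rw [← intervalIntegral.integral_const_mul]
    simp only [heatKernel, mul_assoc]
  rw [heatEvolution, ← hc, h₁, h₂, h₃, h₄, hc]
  field_simp

theorem heatEvolution_one_le {ν x₀ : ℝ} {f : ℝ → ℝ} (hν : 0 < ν) (hx₀ : 0 < x₀)
    (hfc : Continuous f) (hf0 : ∀ x, 0 ≤ f x) (hf : ∀ x ∉ Ioo 0 x₀, f x = 0) (x : ℝ) :
    heatEvolution ν f 1 x ≤ (√π)⁻¹ * (2 * √ν)⁻¹ * ∫ y in (0 : ℝ)..x₀, f y := by
  rw [heatEvolution_eq_integral_heatKernel hν hx₀ hf one_pos]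
  refine mul_le_mul_of_nonneg_left (integral_mono_on hx₀.le ?_ ?_ fun y _ => ?_) (by positivity)
  · exact (((continuous_heatKernel ν 1).comp (by fun_prop)).mul hfc).intervalIntegrable _ _
  · exact hfc.intervalIntegrable _ _
  · exact mul_le_of_le_one_left (hf0 y) (heatKernel_one_le_one hν _)

/-- The heat evolution of a continuous function supported in `(0, x₀)` is a classical solution
of the heat equation at positive times. -/
theorem exists_hasDerivAt_heatEvolution {ν x₀ : ℝ} {f : ℝ → ℝ} (hν : 0 < ν) (hx₀ : 0 < x₀)
    (hfc : Continuous f) (hf : ∀ x ∉ Ioo 0 x₀, f x = 0) :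
    ∃ hx hxx : ℝ → ℝ → ℝ, ∀ τ, 0 < τ → ∀ x,
      HasDerivAt (heatEvolution ν f τ) (hx τ x) x ∧
      HasDerivAt (hx τ) (hxx τ x) x ∧
      HasDerivAt (fun r => heatEvolution ν f r x) (ν * hxx τ x) τ := by
  set c := (√π)⁻¹ * (2 * √ν)⁻¹
  refine ⟨fun τ x => c * ∫ y in (0 : ℝ)..x₀,
      (-(x - y) / (2 * ν * τ) * heatKernel ν τ (x - y)) * f y,
    fun τ x => c * ∫ y in (0 : ℝ)..x₀,
      (((x - y) ^ 2 / (4 * ν ^ 2 * τ ^ 2) - 1 / (2 * ν * τ)) * heatKernel ν τ (x - y)) * f y,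
    fun τ hτ x => ⟨?_, ?_, ?_⟩⟩
  · have hfun : heatEvolution ν f τ =
        fun x => c * ∫ y in (0 : ℝ)..x₀, heatKernel ν τ (x - y) * f y :=
      funext (heatEvolution_eq_integral_heatKernel hν hx₀ hf hτ)
    rw [hfun]
    have hK := continuous_heatKernel ν τ
    exact (hasDerivAt_integral_mul_of_continuousOn (k := fun x y => heatKernel ν τ (x - y))
      (k' := fun x y => -(x - y) / (2 * ν * τ) * heatKernel ν τ (x - y)) isOpen_univ
      (mem_univ x) hfc (fun q _ => by fun_prop) (by fun_prop)
      fun q _ y => (hasDerivAt_heatKernel hν hτ (q - y)).comp_sub_const q y).const_mul c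
  · have hK := continuous_heatKernel ν τ
    exact (hasDerivAt_integral_mul_of_continuousOn
      (k := fun x y => -(x - y) / (2 * ν * τ) * heatKernel ν τ (x - y))
      (k' := fun x y => ((x - y) ^ 2 / (4 * ν ^ 2 * τ ^ 2) - 1 / (2 * ν * τ)) *
        heatKernel ν τ (x - y)) isOpen_univ
      (mem_univ x) hfc (fun q _ => by fun_prop) (by fun_prop)
      fun q _ y => (hasDerivAt_deriv_heatKernel hν hτ (q - y)).comp_sub_const q y).const_mul c
  · have hcont : ContinuousOn (fun p : ℝ × ℝ =>
        ν * (((x - p.2) ^ 2 / (4 * ν ^ 2 * p.1 ^ 2) - 1 / (2 * ν * p.1)) *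
          heatKernel ν p.1 (x - p.2))) (Ioi 0 ×ˢ univ) := by
      have hK : ContinuousOn (fun p : ℝ × ℝ => heatKernel ν p.1 (x - p.2)) (Ioi 0 ×ˢ univ) :=
        (continuousOn_heatKernel hν).comp (f := fun p : ℝ × ℝ => (p.1, x - p.2))
          (by fun_prop) fun p hp => ⟨hp.1, mem_univ _⟩
      have hpos : ∀ p ∈ (Ioi 0 ×ˢ univ : Set (ℝ × ℝ)), 0 < p.1 := fun p hp => hp.1
      refine continuousOn_const.mul (((ContinuousOn.div (by fun_prop) (by fun_prop) ?_).sub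
        (ContinuousOn.div (by fun_prop) (by fun_prop) ?_)).mul hK)
      all_goals
        intro p hp
        have := hpos p hp
        positivity
    have h := (hasDerivAt_integral_mul_of_continuousOn (a := 0) (b := x₀)
      (k := fun τ y => heatKernel ν τ (x - y))
      (k' := fun τ y => ν * (((x - y) ^ 2 / (4 * ν ^ 2 * τ ^ 2) - 1 / (2 * ν * τ)) *
        heatKernel ν τ (x - y))) isOpen_Ioi hτ hfc
      (fun q _ => (continuous_heatKernel ν q).comp (by fun_prop)) hcont
      fun q hq y => hasDerivAt_heatKernel_time hν hq (x - y)).const_mul c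
    refine (h.congr_deriv ?_).congr_of_eventuallyEq ?_
    · simp only [mul_assoc, intervalIntegral.integral_const_mul]
      ring
    · filter_upwards [Ioi_mem_nhds hτ] with r hr
      exact heatEvolution_eq_integral_heatKernel hν hx₀ hf hr x

/-- Smoothing estimate: an `L²` bound at time `s` gives a pointwise bound at time `s + 1`. -/
theorem abs_le_of_integral_sq_le {ν x₀ L M s : ℝ} (hν : 0 < ν) (hx₀ : 0 < x₀)
    {l v vx vxx : ℝ → ℝ → ℝ} (hl : ∀ t, ∀ x ∈ Icc 0 x₀, |l t x| ≤ L)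
    (hvc : Continuous fun p : ℝ × ℝ => v p.1 p.2)
    (hv₀ : ∀ t, v t 0 = 0) (hv₁ : ∀ t, v t x₀ = 0)
    (hvt : ∀ t, ∀ x ∈ Icc 0 x₀,
      HasDerivAt (fun r => v r x) (ν * vxx t x - l t x * v t x) t)
    (hvx : ∀ t x, HasDerivAt (v t) (vx t x) x)
    (hvxx : ∀ t x, HasDerivAt (vx t) (vxx t x) x)
    (hM : ∫ x in (0 : ℝ)..x₀, v s x ^ 2 ≤ M) {x : ℝ} (hx : x ∈ Icc 0 x₀) :
    |v (s + 1) x| ≤ exp L * ((√π)⁻¹ * (2 * √ν)⁻¹ * (x₀ + M)) := by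
  have hvs : Continuous (v s) := hvc.comp (f := fun x => (s, x)) (by fun_prop)
  set f : ℝ → ℝ := fun y => |v s (max 0 (min y x₀))| with hfdef
  have hfc : Continuous f := by fun_prop
  have hf0 : ∀ y, 0 ≤ f y := fun y => abs_nonneg _
  have hfv : ∀ y ∈ Icc 0 x₀, f y = |v s y| := fun y hy => by
    simp only [hfdef, min_eq_left hy.2, max_eq_right hy.1]
  have hf : ∀ y ∉ Ioo 0 x₀, f y = 0 := fun y hy => by
    rcases le_or_gt y 0 with h | h
    · simp [hfdef, min_eq_left (h.trans hx₀.le), max_eq_left h, hv₀]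
    · have : x₀ ≤ y := not_lt.1 fun h' => hy ⟨h, h'⟩
      simp [hfdef, min_eq_right this, max_eq_right hx₀.le, hv₁]
  obtain ⟨C, hC⟩ := (isCompact_Icc : IsCompact (Icc 0 x₀)).exists_bound_of_continuousOn
    hfc.continuousOn
  have hC' : ∀ y, |f y| ≤ C := fun y => by
    by_cases hy : y ∈ Icc 0 x₀
    · exact hC y hy
    · rw [hf y fun h => hy (Ioo_subset_Icc_self h), abs_zero]
      exact (norm_nonneg _).trans (hC 0 ⟨le_rfl, hx₀.le⟩)
  obtain ⟨hx', hxx', hheat⟩ := exists_hasDerivAt_heatEvolution hν hx₀ hfc hf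
  have hcont := continuous_heatEvolution (ν := ν) hfc hC'
  have key := abs_le_of_parabolic_supersolution (s := s) (t := s + 1) hν hl hvc hv₀ hv₁ hvt hvx
    hvxx (ψ := fun t x => exp (L * (t - s)) * heatEvolution ν f (t - s) x)
    (ψt := fun t x => exp (L * (t - s)) * L * heatEvolution ν f (t - s) x +
      exp (L * (t - s)) * (ν * hxx' (t - s) x))
    (ψx := fun t x => exp (L * (t - s)) * hx' (t - s) x)
    (ψxx := fun t x => exp (L * (t - s)) * hxx' (t - s) x)
    (Continuous.mul (by fun_prop)
      (hcont.comp (f := fun p : ℝ × ℝ => (p.1 - s, p.2)) (by fun_prop)))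
    (fun t _ => mul_nonneg (exp_pos _).le (heatEvolution_nonneg hf0 _ _))
    (fun t _ => mul_nonneg (exp_pos _).le (heatEvolution_nonneg hf0 _ _))
    (fun t ht y _ => ?_) (fun t ht y _ => ((hheat _ (sub_pos.2 ht) y).1).const_mul _)
    (fun t ht y _ => ((hheat _ (sub_pos.2 ht) y).2.1).const_mul _)
    (fun t ht y hy => ?_) (fun y hy => ?_) (by linarith) hx
  · simp only [add_sub_cancel_left, mul_one] at key
    refine key.trans (mul_le_mul_of_nonneg_left
      ((heatEvolution_one_le hν hx₀ hfc hf0 hf x).trans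
        (mul_le_mul_of_nonneg_left ?_ (by positivity))) (exp_pos _).le)
    have hint : ∫ y in (0 : ℝ)..x₀, f y ≤ ∫ y in (0 : ℝ)..x₀, (1 + v s y ^ 2) := by
      refine integral_mono_on hx₀.le (hfc.intervalIntegrable _ _)
        (Continuous.intervalIntegrable (by fun_prop) _ _) fun y hy => ?_
      rw [hfv y hy, ← sq_abs (v s y)]
      nlinarith [sq_nonneg (|v s y| - 1), abs_nonneg (v s y)]
    rw [intervalIntegral.integral_add (by simp)
      (Continuous.intervalIntegrable (by fun_prop) _ _)] at hint
    simp at hint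
    linarith
  · have hE : HasDerivAt (fun r => exp (L * (r - s))) (exp (L * (t - s)) * L) t := by
      simpa using (((hasDerivAt_id t).sub_const s).const_mul L).exp
    exact hE.mul ((hheat _ (sub_pos.2 ht) y).2.2.comp_sub_const t s)
  · have h := (abs_le.1 (hl t y (Ioo_subset_Icc_self hy))).1
    have h' : 0 ≤ (L + l t y) * (exp (L * (t - s)) * heatEvolution ν f (t - s) y) :=
      mul_nonneg (by linarith) (mul_nonneg (exp_pos _).le (heatEvolution_nonneg hf0 _ _))
    linarith
  · simp [heatEvolution_zero, hfv y hy]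

/-- Exponential bound for Dirichlet solutions on `(0, x₀)`, with rate `ν k² - L` for every
`0 < k < π / x₀`. -/
theorem abs_le_exp_of_spectral_gap {ν x₀ L k B s t : ℝ} (hν : 0 < ν) (hx₀ : 0 < x₀)
    {l v vx vxx : ℝ → ℝ → ℝ} (hl : ∀ t, ∀ x ∈ Icc 0 x₀, |l t x| ≤ L)
    (hvc : Continuous fun p : ℝ × ℝ => v p.1 p.2)
    (hv₀ : ∀ t, v t 0 = 0) (hv₁ : ∀ t, v t x₀ = 0)
    (hvt : ∀ t, ∀ x ∈ Icc 0 x₀,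
      HasDerivAt (fun r => v r x) (ν * vxx t x - l t x * v t x) t)
    (hvx : ∀ t x, HasDerivAt (v t) (vx t x) x)
    (hvxx : ∀ t x, HasDerivAt (vx t) (vxx t x) x)
    (hk : 0 < k) (hkπ : k * x₀ < π) (hB : ∀ x ∈ Icc 0 x₀, |v s x| ≤ B) (hst : s ≤ t)
    {x : ℝ} (hx : x ∈ Icc 0 x₀) :
    |v t x| ≤ B / cos (k * x₀ / 2) * exp (-(ν * k ^ 2 - L) * (t - s)) := by
  have hkx : 0 < k * x₀ := by positivity
  have hc : 0 < cos (k * x₀ / 2) := cos_pos_of_mem_Ioo ⟨by linarith, by linarith⟩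
  have hB0 : 0 ≤ B := (abs_nonneg _).trans (hB x hx)
  set c := cos (k * x₀ / 2)
  set γ := ν * k ^ 2 - L with hγ
  have hcos : ∀ y ∈ Icc 0 x₀, c ≤ cos (k * (y - x₀ / 2)) := fun y hy => by
    rw [← cos_abs (k * (y - x₀ / 2))]
    refine cos_le_cos_of_nonneg_of_le_pi (abs_nonneg _) (by linarith) (abs_le.2 ⟨?_, ?_⟩)
    · nlinarith [mul_nonneg hk.le hy.1]
    · nlinarith [mul_nonneg hk.le (sub_nonneg.2 hy.2)]
  have hnn : ∀ r, ∀ y ∈ Icc 0 x₀,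
      0 ≤ B / c * exp (-γ * (r - s)) * cos (k * (y - x₀ / 2)) := fun r y hy =>
    mul_nonneg (by positivity) (hc.le.trans (hcos y hy))
  have hlin : ∀ y, HasDerivAt (fun y => k * (y - x₀ / 2)) k y := fun y => by
    simpa using ((hasDerivAt_id y).sub_const (x₀ / 2)).const_mul k
  have key := abs_le_of_parabolic_supersolution (s := s) hν hl hvc hv₀ hv₁ hvt hvx hvxx
    (ψ := fun r y => B / c * exp (-γ * (r - s)) * cos (k * (y - x₀ / 2)))
    (ψt := fun r y => B / c * (exp (-γ * (r - s)) * -γ) * cos (k * (y - x₀ / 2)))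
    (ψx := fun r y => B / c * exp (-γ * (r - s)) * (-sin (k * (y - x₀ / 2)) * k))
    (ψxx := fun r y => B / c * exp (-γ * (r - s)) * (-(cos (k * (y - x₀ / 2)) * k) * k))
    (by fun_prop) (fun r _ => hnn r 0 ⟨le_rfl, hx₀.le⟩) (fun r _ => hnn r x₀ ⟨hx₀.le, le_rfl⟩)
    (fun r _ y _ => ?_) (fun r _ y _ => (hlin y).cos.const_mul _)
    (fun r _ y _ => ((hlin y).sin.neg.mul_const k).const_mul _)
    (fun r _ y hy => ?_) (fun y hy => ?_) hst hx
  · exact key.trans (mul_le_of_le_one_right (by positivity) (cos_le_one _))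
  · have hE : HasDerivAt (fun r => exp (-γ * (r - s))) (exp (-γ * (r - s)) * -γ) r := by
      simpa using (((hasDerivAt_id r).sub_const s).const_mul (-γ)).exp
    exact (hE.const_mul _).mul_const _
  · have hy' := Ioo_subset_Icc_self hy
    have h := mul_nonneg (show 0 ≤ L + l r y by linarith [(abs_le.1 (hl r y hy')).1]) (hnn r y hy')
    rw [hγ] at h ⊢
    linarith
  · simp only [sub_self, mul_zero, exp_zero, mul_one]
    refine (hB y hy).trans ?_
    rw [div_mul_eq_mul_div, le_div_iff₀ hc]
    exact mul_le_mul_of_nonneg_left (hcos y hy) hB0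

/-- Backward uniqueness for the 1D linear heat equation with bounded potential on a
small interval: if `u₁, u₂` solve `∂_t v = ν ∂²ₓ v − l(t,x) v` on `[0,x₀] × ℝ` with
Dirichlet boundary conditions at `x = 0` and `x = x₀`, `|l| ≤ L` and
`ν (π/x₀)² > L`, and the difference stays bounded in `L²(0,x₀)` as `t → −∞`, then
`u₁ ≡ u₂` on `[0,x₀] × ℝ`. -/
theorem backward_uniqueness_heat_strip
    (ν x₀ L : ℝ) (hν : 0 < ν) (hx₀ : 0 < x₀)
    (hgap : L < ν * (π / x₀) ^ 2)
    (l : ℝ → ℝ → ℝ) (hl : ∀ t : ℝ, ∀ x ∈ Set.Icc 0 x₀, |l t x| ≤ L)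
    (u₁ u₂ : ℝ → ℝ → ℝ)
    (hreg₁ : ∀ t : ℝ, ContDiff ℝ 2 (u₁ t)) (hreg₂ : ∀ t : ℝ, ContDiff ℝ 2 (u₂ t))
    (hjoint₁ : Continuous fun p : ℝ × ℝ => u₁ p.1 p.2)
    (hjoint₂ : Continuous fun p : ℝ × ℝ => u₂ p.1 p.2)
    (hpde₁ : ∀ t : ℝ, ∀ x ∈ Set.Icc 0 x₀,
      HasDerivAt (fun s => u₁ s x) (ν * iteratedDeriv 2 (u₁ t) x - l t x * u₁ t x) t)
    (hpde₂ : ∀ t : ℝ, ∀ x ∈ Set.Icc 0 x₀,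
      HasDerivAt (fun s => u₂ s x) (ν * iteratedDeriv 2 (u₂ t) x - l t x * u₂ t x) t)
    (hbc₁ : ∀ t : ℝ, u₁ t 0 = 0 ∧ u₁ t x₀ = 0)
    (hbc₂ : ∀ t : ℝ, u₂ t 0 = 0 ∧ u₂ t x₀ = 0)
    (hbdd : ∃ M : ℝ, ∀ t ≤ (0:ℝ), (∫ x in (0:ℝ)..x₀, (u₁ t x - u₂ t x) ^ 2) ≤ M) :
    ∀ t : ℝ, ∀ x ∈ Set.Icc 0 x₀, u₁ t x = u₂ t x := by
  obtain ⟨M, hM⟩ := hbdd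
  set v : ℝ → ℝ → ℝ := fun t x => u₁ t x - u₂ t x with hv
  set vx : ℝ → ℝ → ℝ := fun t x => deriv (u₁ t) x - deriv (u₂ t) x
  set vxx : ℝ → ℝ → ℝ := fun t x => iteratedDeriv 2 (u₁ t) x - iteratedDeriv 2 (u₂ t) x
  have hd : ∀ {g : ℝ → ℝ}, ContDiff ℝ 2 g → ∀ x, HasDerivAt g (deriv g x) x := fun hg x =>
    (hg.differentiable (by norm_num) x).hasDerivAt
  have hdd : ∀ {g : ℝ → ℝ}, ContDiff ℝ 2 g → ∀ x,
      HasDerivAt (deriv g) (iteratedDeriv 2 g x) x := fun {g} hg x => by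
    have h := (hg.differentiable_iteratedDeriv 1 (by norm_num) x).hasDerivAt
    rwa [← iteratedDeriv_succ, iteratedDeriv_one] at h
  have hvc : Continuous fun p : ℝ × ℝ => v p.1 p.2 := hjoint₁.sub hjoint₂
  have hv₀ : ∀ t, v t 0 = 0 := fun t => by simp [hv, hbc₁, hbc₂]
  have hv₁ : ∀ t, v t x₀ = 0 := fun t => by simp [hv, hbc₁, hbc₂]
  have hvt : ∀ t, ∀ x ∈ Icc 0 x₀,
      HasDerivAt (fun r => v r x) (ν * vxx t x - l t x * v t x) t := fun t x hx =>
    ((hpde₁ t x hx).sub (hpde₂ t x hx)).congr_deriv (by ring)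
  have hvx : ∀ t x, HasDerivAt (v t) (vx t x) x := fun t x =>
    (hd (hreg₁ t) x).sub (hd (hreg₂ t) x)
  have hvxx : ∀ t x, HasDerivAt (vx t) (vxx t x) x := fun t x =>
    (hdd (hreg₁ t) x).sub (hdd (hreg₂ t) x)
  obtain ⟨k, hk, hkπ, hkL⟩ : ∃ k, 0 < k ∧ k * x₀ < π ∧ L < ν * k ^ 2 := by
    have hpx : 0 < π / x₀ := by positivity
    have hgap' : √(L / ν) < π / x₀ := by
      rw [sqrt_lt' hpx, div_lt_iff₀' hν]
      exact hgap
    obtain ⟨k, hk₁, hk₂⟩ := exists_between hgap'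
    have hk : 0 < k := (sqrt_nonneg _).trans_lt hk₁
    refine ⟨k, hk, (lt_div_iff₀ hx₀).1 hk₂, ?_⟩
    rwa [sqrt_lt' hk, div_lt_iff₀' hν] at hk₁
  set B := exp L * ((√π)⁻¹ * (2 * √ν)⁻¹ * (x₀ + M))
  have hB : ∀ s ≤ 0, ∀ x ∈ Icc 0 x₀, |v (s + 1) x| ≤ B := fun s hs x hx =>
    abs_le_of_integral_sq_le hν hx₀ hl hvc hv₀ hv₁ hvt hvx hvxx (hM s hs) hx
  intro t x hx
  have hdecay : ∀ᶠ s in atBot,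
      |v t x| ≤ B / cos (k * x₀ / 2) * exp (-(ν * k ^ 2 - L) * (t - (s + 1))) := by
    filter_upwards [eventually_le_atBot 0, eventually_le_atBot (t - 1)] with s hs hst
    exact abs_le_exp_of_spectral_gap hν hx₀ hl hvc hv₀ hv₁ hvt hvx hvxx hk hkπ (hB s hs)
      (by linarith) hx
  have hlim : Tendsto (fun s : ℝ => B / cos (k * x₀ / 2) *
      exp (-(ν * k ^ 2 - L) * (t - (s + 1)))) atBot (𝓝 (B / cos (k * x₀ / 2) * 0)) := by
    refine (tendsto_exp_atBot.comp
      (f := fun s : ℝ => -(ν * k ^ 2 - L) * (t - (s + 1))) ?_).const_mul _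
    have : (fun s : ℝ => -(ν * k ^ 2 - L) * (t - (s + 1))) =
        fun s => (ν * k ^ 2 - L) * s + -(ν * k ^ 2 - L) * (t - 1) := by
      ext s
      ring
    rw [this]
    exact tendsto_atBot_add_const_right _ _ (tendsto_id.const_mul_atBot (sub_pos.2 hkL))
  have hzero : |v t x| ≤ 0 := by simpa only [mul_zero] using ge_of_tendsto hlim hdecay
  exact sub_eq_zero.1 (abs_nonpos_iff.1 hzero)
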